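/- Let λ ≥ 2 and let E_1, E_2, E_3 ≥ 0 be the energies of the first three nodes of a line v_1 → v_2 → v_3 → ... with E_1 < λ·E_2 and E_2 ≥ λ·E_3. After the λ-exchange update on the pair (v_1, v_2), i.e., E_1' = (λ/(λ+1))(E_1+E_2) and E_2' = (1/(λ+1))(E_1+E_2) with E_3' = E_3, the change in potential satisfies (λ·E_2' − E_1')·1[E_1' < λE_2'] + (λ·E_3' − E_2')·1[E_2' < λE_3'] − (λ·E_2 − E_1) ≤ (λ/(λ+1))·(E_1 − λ·E_2) < 0. -/

import Mathlib

theorem stmt12 (lam : ℝ) (hlam : 2 ≤ lam) (E1 E2 E3 : ℝ)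
    (h1 : 0 ≤ E1) (h2 : 0 ≤ E2) (h3 : 0 ≤ E3)
    (hlt : E1 < lam * E2) (heq : lam * E3 ≤ E2) :
    let E1' := lam / (lam + 1) * (E1 + E2)
    let E2' := 1 / (lam + 1) * (E1 + E2)
    let E3' := E3
    (if E1' < lam * E2' then lam * E2' - E1' else 0) +
        (if E2' < lam * E3' then lam * E3' - E2' else 0) - (lam * E2 - E1)
      ≤ lam / (lam + 1) * (E1 - lam * E2) ∧
      lam / (lam + 1) * (E1 - lam * E2) < 0 := by
  intro E1' E2' E3'
  have hp : 0 < lam + 1 := by linarith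
  have hk : 0 < 1 / (lam + 1) := by positivity
  have e : lam / (lam + 1) = 1 - 1 / (lam + 1) := by field_simp; ring
  have hl : 0 < lam / (lam + 1) := div_pos (by linarith) hp
  have hD : 0 < 1 / (lam + 1) * (lam * E2 - E1) := mul_pos hk (by linarith)
  have hE1 : E1' = lam * E2' := by simp only [E1', E2']; ring
  have hE2 : E2' = E2 - 1 / (lam + 1) * (lam * E2 - E1) := by
    simp only [E2']; field_simp; ring
  have hR : lam / (lam + 1) * (E1 - lam * E2)
      = 1 / (lam + 1) * (lam * E2 - E1) - (lam * E2 - E1) := by rw [e]; ring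
  refine ⟨?_, mul_neg_of_pos_of_neg hl (by linarith)⟩
  rw [if_neg (by rw [hE1]; exact lt_irrefl _), hR]
  have hE3 : E3' = E3 := rfl
  rw [hE3]
  split_ifs <;> linarith
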